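/- Let T be a rooted tree on the vertex set of a flow graph G that has the parent property, and let G' be the derived graph of G with respect to T (which is itself a flow graph with start vertex s). Then T has the sibling property with respect to G if and only if T has the sibling property with respect to G'. That is, T is the dominator tree of G if and only if T is the dominator tree of G'. -/

import Mathlib

variable {V : Type*}

/-- `IsWalk A u v p`: `p` is a path from `u` to `v` in the digraph with arc
relation `A`, listing all of its vertices in order. -/
def IsWalk (A : V → V → Prop) (u v : V) (p : List V) : Prop :=
  p.Chain' A ∧ p.head? = some u ∧ p.getLast? = some v

/-- A flow graph: a directed graph with arc relation `A` and start vertex `s`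
such that every vertex is reachable from `s` and no arc enters `s`. -/
structure FlowGraph (V : Type*) where
  A : V → V → Prop
  s : V
  reach : ∀ v : V, ∃ p : List V, IsWalk A s v p
  no_enter : ∀ v : V, ¬ A v s

/-- `DomOn A s v w`: `v` lies on every path from `s` to `w` in the digraph with
arc relation `A`. -/
def DomOn (A : V → V → Prop) (s v w : V) : Prop :=
  ∀ p : List V, IsWalk A s w p → v ∈ p

/-- `v` dominates `w` in the flow graph `G`. -/
def FlowGraph.Dom (G : FlowGraph V) (v w : V) : Prop :=
  DomOn G.A G.s v w

/-- A rooted tree on vertex set `V`, given by a parent function: the root is a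
fixed point of the parent function, and iterating the parent function from any
vertex eventually reaches the root. -/
structure ParentTree (V : Type*) where
  parent : V → V
  root : V
  parent_root : parent root = root
  reaches_root : ∀ v : V, ∃ n : ℕ, parent^[n] v = root

/-- `T.Anc x y`: `x` is an ancestor of `y` in the rooted tree `T` (every vertex
is an ancestor of itself). -/
def ParentTree.Anc (T : ParentTree V) (x y : V) : Prop :=
  ∃ n : ℕ, T.parent^[n] y = x

/-- `T` has the parent property with respect to `G`: for every arc `(v, w)`,
the parent of `w` is an ancestor of `v` in `T`. -/
def ParentProperty (G : FlowGraph V) (T : ParentTree V) : Prop :=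
  ∀ v w : V, G.A v w → T.Anc (T.parent w) v

/-- The sibling property with respect to an arbitrary arc relation `A` with
start vertex `s`: no non-root vertex dominates a distinct vertex with the same
parent. -/
def SiblingPropertyOn (A : V → V → Prop) (s : V) (T : ParentTree V) : Prop :=
  ∀ v w : V, v ≠ T.root → w ≠ T.root → v ≠ w → T.parent v = T.parent w →
    ¬ DomOn A s v w

/-- `T` has the sibling property with respect to the flow graph `G`. -/
def SiblingProperty (G : FlowGraph V) (T : ParentTree V) : Prop :=
  SiblingPropertyOn G.A G.s T

/-- `T` is the dominator tree of the digraph with arc relation `A` and start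
vertex `s`: `T` is rooted at `s`, and the parent of every vertex `v ≠ s` is its
immediate dominator, i.e. a strict dominator of `v` that is dominated by every
strict dominator of `v`. -/
def IsDomTreeOn (A : V → V → Prop) (s : V) (T : ParentTree V) : Prop :=
  T.root = s ∧ ∀ v : V, v ≠ s →
    DomOn A s (T.parent v) v ∧ T.parent v ≠ v ∧
    ∀ u : V, DomOn A s u v → u ≠ v → DomOn A s u (T.parent v)

/-- `T` is the dominator tree of the flow graph `G`. -/
def IsDomTree (G : FlowGraph V) (T : ParentTree V) : Prop :=
  IsDomTreeOn G.A G.s T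

/-- `ord` is (the numbering of) a preorder of the rooted tree `T`: an injective
numbering of the vertices such that for every vertex `v` the descendants of `v`
are ordered consecutively, with `v` first. -/
def IsTreePreorder (T : ParentTree V) (ord : V → ℕ) : Prop :=
  Function.Injective ord ∧
  (∀ v x : V, T.Anc v x → ord v ≤ ord x) ∧
  (∀ v x y z : V, T.Anc v x → T.Anc v z → ord x ≤ ord y → ord y ≤ ord z →
    T.Anc v y)

/-- A preorder `ord` of `T` is low-high on the digraph with arc relation `A`
and start vertex `s`: for every `v ≠ s`, either `(t(v), v)` is an arc, or there
are arcs `(u, v)` and `(w, v)` with `u < v < w` in the order and `w` not a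
descendant of `v` in `T`. -/
def LowHighOn (A : V → V → Prop) (s : V) (T : ParentTree V) (ord : V → ℕ) :
    Prop :=
  IsTreePreorder T ord ∧
  ∀ v : V, v ≠ s → (A (T.parent v) v ∨
    ∃ u w : V, A u v ∧ A w v ∧ ord u < ord v ∧ ord v < ord w ∧ ¬ T.Anc v w)

/-- A low-high order of `T` on the flow graph `G`. -/
def LowHigh (G : FlowGraph V) (T : ParentTree V) (ord : V → ℕ) : Prop :=
  LowHighOn G.A G.s T ord

/-- `B` is (the arc relation of) a spanning tree of `G` rooted at `s`: a
subgraph of `G` in which no arc enters `s`, every vertex other than `s` has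
exactly one entering arc, and every vertex is reachable from `s`. -/
def IsSpanningTree (G : FlowGraph V) (B : V → V → Prop) : Prop :=
  (∀ u v : V, B u v → G.A u v) ∧
  (∀ v : V, ¬ B v G.s) ∧
  (∀ v : V, v ≠ G.s → ∃! u : V, B u v) ∧
  (∀ v : V, ∃ p : List V, IsWalk B G.s v p)

/-- Spanning trees `B` and `R` of `G` rooted at `s` are independent: for every
vertex `v`, the paths from `s` to `v` in `B` and in `R` have in common only
dominators of `v`. -/
def Independent (G : FlowGraph V) (B R : V → V → Prop) : Prop :=
  ∀ v : V, ∀ p q : List V, IsWalk B G.s v p → IsWalk R G.s v q →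
    ∀ x : V, x ∈ p → x ∈ q → G.Dom x v

/-- Spanning trees `B` and `R` of `G` rooted at `s` are strongly independent:
for every pair of vertices `v`, `w`, either the path from `s` to `v` in `B` and
the path from `s` to `w` in `R` have in common only common dominators of `v`
and `w`, or the same holds with the roles of `B` and `R` exchanged. -/
def StronglyIndependent (G : FlowGraph V) (B R : V → V → Prop) : Prop :=
  ∀ v w : V,
    (∀ p q : List V, IsWalk B G.s v p → IsWalk R G.s w q →
      ∀ x : V, x ∈ p → x ∈ q → G.Dom x v ∧ G.Dom x w) ∨
    (∀ p q : List V, IsWalk R G.s v p → IsWalk B G.s w q →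
      ∀ x : V, x ∈ p → x ∈ q → G.Dom x v ∧ G.Dom x w)

/-- `IsDerivedArcOf G T v b a`: `(a, b)` is the derived arc of the arc `(v, b)`
of `G` with respect to `T`: `b` is not an ancestor of `v` in `T`, and `a = v`
if `v` is the parent of `b`, while otherwise `a` is the sibling of `b` in `T`
that is an ancestor of `v`. -/
def IsDerivedArcOf (G : FlowGraph V) (T : ParentTree V) (v b a : V) : Prop :=
  G.A v b ∧ ¬ T.Anc b v ∧
    ((v = T.parent b ∧ a = v) ∨
     (v ≠ T.parent b ∧ a ≠ T.root ∧ T.parent a = T.parent b ∧ T.Anc a v))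

/-- The arc relation of the derived graph of `G` with respect to `T`. -/
def DerivedArc (G : FlowGraph V) (T : ParentTree V) (a b : V) : Prop :=
  ∃ v : V, IsDerivedArcOf G T v b a

/-- `S` is the vertex set of a strongly connected subgraph of the digraph with
arc relation `A`. -/
def StronglyConnectedSet (A : V → V → Prop) (S : Set V) : Prop :=
  S.Nonempty ∧ ∀ u ∈ S, ∀ v ∈ S, ∃ p : List V,
    IsWalk A u v p ∧ ∀ x ∈ p, x ∈ S

/-- `G` is reducible: every strongly connected subgraph has a single entry
vertex, i.e. a vertex of the subgraph contained in every path from `s` to a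
vertex of the subgraph. -/
def Reducible (G : FlowGraph V) : Prop :=
  ∀ S : Set V, StronglyConnectedSet G.A S →
    ∃ v ∈ S, ∀ u ∈ S, ∀ p : List V, IsWalk G.A G.s u p → v ∈ p

/-- A digraph is acyclic if it has no cycle (a path from a vertex to itself
with at least one arc). -/
def Acyclic (A : V → V → Prop) : Prop :=
  ¬ ∃ (v : V) (p : List V), IsWalk A v v p ∧ 2 ≤ p.length

/-- `IsHighWalk A ν u v p`: `p` is a high path from `u` to `v`: a path all of
whose vertices other than `u` and `v` are greater (in the numbering `ν`) than
both `u` and `v`. -/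
def IsHighWalk (A : V → V → Prop) (ν : V → ℕ) (u v : V) (p : List V) : Prop :=
  IsWalk A u v p ∧ ∀ x ∈ p, x ≠ u → x ≠ v → ν u < ν x ∧ ν v < ν x

/-!
By the parent property, every walk from the root to `w` passes through all ancestors of `w`, so
ancestors dominate. If moreover the sibling property holds, every dominator is an ancestor: if `u`
dominates `v`, then `u` also dominates the parent of `v`, unless `u` lies below some child `a` of
that parent; in that case `a` dominates `v` as well, so `a = v`, and `v` and `u` dominate each
other. Hence, given the parent property, being the dominator tree is the same as having the sibling
property.

For siblings, dominance in `G` and in `G'` agree. A walk of `G` gives a walk of `G'` using only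
vertices of the original walk, since the new tail of a derived arc is an ancestor of the old tail
and so already lies on the walk. Conversely, let a walk of `G'` to `w` avoid a sibling `v` of `w`.
Along this walk, `v` dominates in `G` none of the siblings of `w`: if `(a, b)` is derived from
`(y, b)`, then either `y` is the common parent, which `v` does not dominate, or `a` is a sibling
which `v` does not dominate and `y` lies below `a`. In the latter case `v` does not dominate `y`,
because it is not below `a`, and dominators of `y` that are not below its ancestor `a` dominate `a`.
-/

namespace IsWalk

variable {A : V → V → Prop} {u v w : V} {p : List V}

theorem singleton (v : V) : IsWalk A v v [v] :=
  ⟨List.isChain_singleton v, rfl, rfl⟩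

theorem start_mem (hp : IsWalk A u v p) : u ∈ p :=
  List.mem_of_head? hp.2.1

theorem end_mem (hp : IsWalk A u v p) : v ∈ p :=
  List.mem_of_getLast? hp.2.2

theorem concat (hp : IsWalk A u v p) (hvw : A v w) : IsWalk A u w (p ++ [w]) := by
  obtain ⟨hchain, hhead, hlast⟩ := hp
  refine ⟨hchain.append (List.isChain_singleton w) ?_, ?_, List.getLast?_concat⟩
  · simpa [hlast] using hvw
  · simp [hhead]

theorem induction {Q : V → Prop} (hp : IsWalk A u v p) (start : Q u)
    (arc : ∀ a b, A a b → b ∈ p → Q a → Q b) : Q v := by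
  have hchain : p.IsChain fun a b => A a b ∧ b ∈ p :=
    hp.1.imp_of_mem_imp fun _ _ _ hb hab => ⟨hab, hb⟩
  refine hchain.induction Q p (fun a b hab => arc a b hab.1 hab.2) (fun hne => ?_) v hp.end_mem
  rwa [(List.head_eq_iff_head?_eq_some hne).2 hp.2.1]

end IsWalk

namespace DomOn

variable {A : V → V → Prop} {s u v w : V}

theorem refl (A : V → V → Prop) (s v : V) : DomOn A s v v :=
  fun _ hp => hp.end_mem

theorem eq_start (h : DomOn A s v s) : v = s :=
  List.mem_singleton.1 (h [s] (.singleton s))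

theorem of_arc (h : DomOn A s u w) (hvw : A v w) (huw : u ≠ w) : DomOn A s u v := by
  intro p hp
  have hmem : u ∈ p ++ [w] := h _ (hp.concat hvw)
  simpa [huw] using hmem

theorem induction_of_not {Q : V → Prop} (h : ¬ DomOn A s u w) (start : u ≠ s → Q s)
    (arc : ∀ a b, A a b → u ≠ b → ¬ DomOn A s u a → Q a → Q b) : Q w := by
  obtain ⟨p, hp, hup⟩ : ∃ p, IsWalk A s w p ∧ u ∉ p := by simpa [DomOn] using h
  have hus : u ≠ s := fun hus => hup (hus ▸ hp.start_mem)
  have hboth : ¬ DomOn A s u w ∧ Q w := by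
    refine hp.induction (Q := fun x => ¬ DomOn A s u x ∧ Q x)
      ⟨fun hd => hus hd.eq_start, start hus⟩ fun a b hab hb ⟨hua, hQa⟩ => ?_
    have hub : u ≠ b := fun hub => hup (hub ▸ hb)
    exact ⟨fun hd => hua (hd.of_arc hab hub), arc a b hab hub hua hQa⟩
  exact hboth.2

theorem trans (huv : DomOn A s u v) (hvw : DomOn A s v w) : DomOn A s u w := by
  by_contra huw
  refine induction_of_not (Q := fun x => ¬ DomOn A s v x) huw (fun hus hvs => ?_)
    (fun a b hab hub hua hva hvb => ?_) hvw
  · exact hus (hvs.eq_start ▸ huv).eq_start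
  · have hvb' : v ≠ b := fun h => hua ((h ▸ huv).of_arc hab hub)
    exact hva (hvb.of_arc hab hvb')

end DomOn

namespace FlowGraph

variable (G : FlowGraph V)

@[elab_as_elim]
theorem induction {Q : V → Prop} (start : Q G.s) (arc : ∀ a b, G.A a b → Q a → Q b) (v : V) :
    Q v := by
  obtain ⟨p, hp⟩ := G.reach v
  exact hp.induction start fun a b hab _ => arc a b hab

variable {G} in
theorem Dom.antisymm {u v : V} (huv : G.Dom u v) (hvu : G.Dom v u) : u = v := by
  by_contra! hne
  -- Whichever of `u` and `v` a walk reached first would not be dominated by the other.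
  have not_dom_start {x y : V} (hxy : x ≠ y) (hyx : G.Dom y x) : ¬ G.Dom x G.s := fun hx =>
    hxy (hx.eq_start.trans (DomOn.eq_start (hx.eq_start ▸ hyx)).symm)
  have not_dom_arc {x y a b : V} (hyx : G.Dom y x) (hab : G.A a b) (hxy : x ≠ y)
      (hxa : ¬ G.Dom x a) (hya : ¬ G.Dom y a) : ¬ G.Dom x b := by
    intro hxb
    have hxb' : x ≠ b := fun h => hya ((h ▸ hyx).of_arc hab (h ▸ hxy.symm))
    exact hxa (hxb.of_arc hab hxb')
  have not_dom : ∀ x, ¬ G.Dom u x ∧ ¬ G.Dom v x :=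
    G.induction ⟨not_dom_start hne hvu, not_dom_start hne.symm huv⟩ fun a b hab ⟨hua, hva⟩ =>
      ⟨not_dom_arc hvu hab hne hua hva, not_dom_arc huv hab hne.symm hva hua⟩
  exact (not_dom v).1 huv

end FlowGraph

namespace ParentTree

variable {T : ParentTree V} {x y : V}

@[elab_as_elim]
theorem induction (T : ParentTree V) {Q : V → Prop} (root : Q T.root)
    (child : ∀ v, v ≠ T.root → Q (T.parent v) → Q v) (v : V) : Q v := by
  obtain ⟨n, hn⟩ := T.reaches_root v
  induction n generalizing v with
  | zero => exact (show v = T.root from hn) ▸ root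
  | succ n ih =>
    by_cases hv : v = T.root
    · exact hv ▸ root
    · exact child v hv (ih (T.parent v) hn)

theorem Anc.refl (T : ParentTree V) (x : V) : T.Anc x x :=
  ⟨0, rfl⟩

theorem anc_parent (T : ParentTree V) (x : V) : T.Anc (T.parent x) x :=
  ⟨1, rfl⟩

theorem Anc.trans {z : V} (hxy : T.Anc x y) (hyz : T.Anc y z) : T.Anc x z := by
  obtain ⟨m, rfl⟩ := hxy
  obtain ⟨n, rfl⟩ := hyz
  exact ⟨m + n, Function.iterate_add_apply _ _ _ _⟩

theorem Anc.eq_or_anc_parent (h : T.Anc x y) : x = y ∨ T.Anc x (T.parent y) := by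
  obtain ⟨_ | n, rfl⟩ := h
  · exact .inl rfl
  · exact .inr ⟨n, rfl⟩

theorem Anc.parent_parent (h : T.Anc x y) : T.Anc (T.parent x) (T.parent y) := by
  obtain ⟨n, rfl⟩ := h
  exact ⟨n, (Function.Commute.iterate_self T.parent n) y⟩

theorem Anc.eq_of_root_eq (h : T.Anc x y) (hy : T.root = y) : x = y := by
  obtain ⟨n, rfl⟩ := h
  exact Function.iterate_fixed (hy ▸ T.parent_root) n

theorem not_anc_parent (hx : x ≠ T.root) : ¬ T.Anc x (T.parent x) := by
  induction x using T.induction with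
  | root => exact absurd rfl hx
  | child v hv ih =>
    intro hanc
    have hroot : T.parent v = T.root := not_not.1 fun h => ih h hanc.parent_parent
    exact hv ((hanc.eq_of_root_eq hroot.symm).trans hroot)

theorem parent_ne (hx : x ≠ T.root) : T.parent x ≠ x := fun h =>
  not_anc_parent hx (h.symm ▸ .refl T x)

theorem not_anc_of_parent_eq (hx : x ≠ T.root) (hxy : x ≠ y) (hp : T.parent x = T.parent y) :
    ¬ T.Anc x y := by
  intro h
  rcases h.eq_or_anc_parent with h | h
  · exact hxy h
  · exact not_anc_parent hx (hp ▸ h)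

theorem Anc.exists_child (h : T.Anc x y) (hne : x ≠ y) :
    ∃ a, a ≠ T.root ∧ T.parent a = x ∧ T.Anc a y := by
  induction y using T.induction with
  | root => exact absurd (h.eq_of_root_eq rfl) hne
  | child v hv ih =>
    by_cases hx : x = T.parent v
    · exact ⟨v, hv, hx.symm, .refl T v⟩
    · obtain ⟨a, har, hax, hav⟩ := ih (h.eq_or_anc_parent.resolve_left hne) hx
      exact ⟨a, har, hax, hav.trans (T.anc_parent v)⟩

end ParentTree

namespace ParentProperty

variable {G : FlowGraph V} {T : ParentTree V} {u v w x y : V}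

theorem anc_of_arc (hpp : ParentProperty G T) (hvw : G.A v w) (hu : T.Anc u w) (huw : u ≠ w) :
    T.Anc u v :=
  (hu.eq_or_anc_parent.resolve_left huw).trans (hpp v w hvw)

theorem dom_of_anc (hpp : ParentProperty G T) (hroot : T.root = G.s) (h : T.Anc u v) :
    G.Dom u v := by
  by_contra hd
  exact DomOn.induction_of_not (Q := fun x => ¬ T.Anc u x) hd
    (fun hus hu => hus (hu.eq_of_root_eq hroot))
    (fun _ _ hab hub _ hua hu => hua (hpp.anc_of_arc hab hu hub)) h

theorem not_dom_of_anc_of_ne (hpp : ParentProperty G T) (hroot : T.root = G.s) (h : T.Anc v u)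
    (hne : u ≠ v) : ¬ G.Dom u v := fun hd =>
  hne (hd.antisymm (hpp.dom_of_anc hroot h))

theorem dom_of_dom_of_anc (hpp : ParentProperty G T) (hroot : T.root = G.s) (hd : G.Dom u y)
    (hxy : T.Anc x y) (hxu : ¬ T.Anc x u) : G.Dom u x := by
  induction y using G.induction with
  | start => exact (hxy.eq_of_root_eq hroot) ▸ hd
  | arc a b hab ih =>
    by_cases hxb : x = b
    · exact hxb ▸ hd
    · have hub : u ≠ b := fun h => hxu (h ▸ hxy)
      exact ih (hd.of_arc hab hub) (hpp.anc_of_arc hab hxy hxb)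

theorem anc_of_dom (hpp : ParentProperty G T) (hroot : T.root = G.s) (hsib : SiblingProperty G T)
    (hd : G.Dom u v) : T.Anc u v := by
  induction v using T.induction with
  | root =>
    rw [hroot] at hd ⊢
    exact hd.eq_start ▸ .refl T u
  | child v hv ih =>
    by_contra hanc
    have hancp : ¬ T.Anc u (T.parent v) := fun h => hanc (h.trans (T.anc_parent v))
    have hpu : T.Anc (T.parent v) u := by
      by_contra hpu
      exact hancp (ih (hpp.dom_of_dom_of_anc hroot hd (T.anc_parent v) hpu))
    obtain ⟨a, har, hap, hau⟩ := hpu.exists_child fun h => hancp (h ▸ .refl T u)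
    have hav : G.Dom a v := (hpp.dom_of_anc hroot hau).trans hd
    obtain rfl : a = v := not_not.1 fun hne => hsib a v har hv hne hap hav
    exact hpp.not_dom_of_anc_of_ne hroot hau (fun h => hanc (h ▸ .refl T u)) hd

theorem isDomTree_iff_siblingProperty (hpp : ParentProperty G T) (hroot : T.root = G.s) :
    IsDomTree G T ↔ SiblingProperty G T := by
  constructor
  · rintro ⟨_, hidom⟩ v w hv hw hne hp hd
    have hdp : G.Dom v (T.parent v) := hp ▸ (hidom w (hroot ▸ hw)).2.2 v hd hne
    exact hpp.not_dom_of_anc_of_ne hroot (T.anc_parent v) (ParentTree.parent_ne hv).symm hdp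
  · refine fun hsib => ⟨hroot, fun v hv =>
      ⟨hpp.dom_of_anc hroot (T.anc_parent v), ParentTree.parent_ne (hroot ▸ hv),
        fun u hd hne => ?_⟩⟩
    have hanc : T.Anc u v := hpp.anc_of_dom hroot hsib hd
    exact hpp.dom_of_anc hroot (hanc.eq_or_anc_parent.resolve_left hne)

theorem exists_derivedArc (hpp : ParentProperty G T) (hvw : G.A v w) (hwv : ¬ T.Anc w v) :
    ∃ a, T.Anc a v ∧ DerivedArc G T a w := by
  by_cases hv : v = T.parent w
  · exact ⟨v, .refl T v, v, hvw, hwv, .inl ⟨hv, rfl⟩⟩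
  · obtain ⟨a, har, hap, hav⟩ := (hpp v w hvw).exists_child (Ne.symm hv)
    exact ⟨a, hav, v, hvw, hwv, .inr ⟨hv, har, hap, hav⟩⟩

theorem exists_isWalk_derivedArc {p : List V} (hpp : ParentProperty G T) (hroot : T.root = G.s)
    (hp : IsWalk G.A G.s w p) : ∃ q, IsWalk (DerivedArc G T) G.s w q ∧ q ⊆ p := by
  -- Ancestors are included so that the induction reaches the new tails of the derived arcs.
  suffices ∀ x, T.Anc x w → ∃ q, IsWalk (DerivedArc G T) G.s x q ∧ q ⊆ p from
    this w (.refl T w)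
  refine hp.induction (Q := fun y => ∀ x, T.Anc x y → ∃ q, IsWalk (DerivedArc G T) G.s x q ∧ q ⊆ p)
    (fun x hx => ?_) fun a b hab hb ih x hx => ?_
  · obtain rfl : x = G.s := hx.eq_of_root_eq hroot
    exact ⟨[G.s], .singleton G.s, by simpa using hp.start_mem⟩
  · by_cases hxa : T.Anc x a
    · exact ih x hxa
    · obtain rfl : x = b := not_not.1 fun hxb => hxa (hpp.anc_of_arc hab hx hxb)
      obtain ⟨c, hca, hcx⟩ := hpp.exists_derivedArc hab hxa
      obtain ⟨q, hq, hqp⟩ := ih c hca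
      exact ⟨q ++ [x], hq.concat hcx, by simp [hqp, hb]⟩

end ParentProperty

section DerivedGraph

variable {G : FlowGraph V} {T : ParentTree V} {v w : V}

/-- The derived graph of `G` with respect to `T`, as a flow graph with the start vertex of `G`. -/
def derivedGraph (G : FlowGraph V) (T : ParentTree V) (hroot : T.root = G.s)
    (hpp : ParentProperty G T) : FlowGraph V where
  A := DerivedArc G T
  s := G.s
  reach v := by
    obtain ⟨p, hp⟩ := G.reach v
    obtain ⟨q, hq, _⟩ := hpp.exists_isWalk_derivedArc hroot hp
    exact ⟨q, hq⟩
  no_enter := fun _ ⟨v, hv, _⟩ => G.no_enter v hv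

theorem parentProperty_derivedGraph (hroot : T.root = G.s) (hpp : ParentProperty G T) :
    ParentProperty (derivedGraph G T hroot hpp) T := by
  rintro a b ⟨v, _, _, ⟨hv, rfl⟩ | ⟨_, _, hab, _⟩⟩
  · exact hv ▸ .refl T a
  · exact hab ▸ T.anc_parent a

theorem dom_of_dom_derivedGraph (hroot : T.root = G.s) (hpp : ParentProperty G T)
    (h : (derivedGraph G T hroot hpp).Dom v w) : G.Dom v w := by
  intro p hp
  obtain ⟨q, hq, hqp⟩ := hpp.exists_isWalk_derivedArc hroot hp
  exact hqp (h q hq)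

theorem dom_derivedGraph_iff_of_parent_eq (hroot : T.root = G.s) (hpp : ParentProperty G T)
    (hv : v ≠ T.root) (hp : T.parent v = T.parent w) :
    (derivedGraph G T hroot hpp).Dom v w ↔ G.Dom v w := by
  refine ⟨dom_of_dom_derivedGraph hroot hpp, fun hd => ?_⟩
  by_contra hd'
  refine DomOn.induction_of_not (Q := fun x => T.parent v = T.parent x → ¬ G.Dom v x) hd'
    (fun hvs _ hd => hvs hd.eq_start) ?_ hp hd
  rintro a b ⟨y, hyb, _, ⟨rfl, rfl⟩ | ⟨_, har, hab, hay⟩⟩ hvb hva ih hp hd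
  · have hvp : ¬ G.Dom v (T.parent v) :=
      hpp.not_dom_of_anc_of_ne hroot (T.anc_parent v) (ParentTree.parent_ne hv).symm
    exact hvp (hp ▸ hd.of_arc hyb hvb)
  · have hne : a ≠ v := fun h => hva (h ▸ DomOn.refl _ _ _)
    have hanc : ¬ T.Anc a v := ParentTree.not_anc_of_parent_eq har hne (hab.trans hp.symm)
    exact ih (hp.trans hab.symm) (hpp.dom_of_dom_of_anc hroot (hd.of_arc hyb hvb) hay hanc)

theorem siblingProperty_derivedGraph_iff (hroot : T.root = G.s) (hpp : ParentProperty G T) :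
    SiblingProperty (derivedGraph G T hroot hpp) T ↔ SiblingProperty G T := by
  refine forall₄_congr fun v w hv _ => forall₂_congr fun _ hp => not_congr ?_
  exact dom_derivedGraph_iff_of_parent_eq hroot hpp hv hp

end DerivedGraph

theorem stmt12_general (G : FlowGraph V) (T : ParentTree V)
    (hroot : T.root = G.s) (hpp : ParentProperty G T) :
    (SiblingProperty G T ↔ SiblingPropertyOn (DerivedArc G T) G.s T) ∧
    (IsDomTree G T ↔ IsDomTreeOn (DerivedArc G T) G.s T) := by
  have hsib : SiblingProperty G T ↔ SiblingProperty (derivedGraph G T hroot hpp) T :=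
    (siblingProperty_derivedGraph_iff hroot hpp).symm
  have hpp' : ParentProperty (derivedGraph G T hroot hpp) T := parentProperty_derivedGraph hroot hpp
  refine ⟨hsib, ?_⟩
  calc IsDomTree G T
      ↔ SiblingProperty G T := hpp.isDomTree_iff_siblingProperty hroot
    _ ↔ SiblingProperty (derivedGraph G T hroot hpp) T := hsib
    _ ↔ IsDomTree (derivedGraph G T hroot hpp) T :=
      (hpp'.isDomTree_iff_siblingProperty hroot).symm

/-- If `T` has the parent property, then `T` has the sibling property with
respect to `G` if and only if it has the sibling property with respect to the
derived graph `G'`; that is, `T` is the dominator tree of `G` if and only if it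
is the dominator tree of `G'`. -/
theorem stmt12 [Fintype V] (G : FlowGraph V) (T : ParentTree V)
    (hroot : T.root = G.s) (hpp : ParentProperty G T) :
    (SiblingProperty G T ↔ SiblingPropertyOn (DerivedArc G T) G.s T) ∧
    (IsDomTree G T ↔ IsDomTreeOn (DerivedArc G T) G.s T) :=
  stmt12_general G T hroot hpp
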